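/- For every integer t ≥ 3, Λ(t) = max{ n ∈ ℕ : C(n,3) ≤ t }. Equivalently, for every integer n ≥ 3, if C(n,3) ≤ t < C(n+1,3), then Λ(t) = n. -/

import Mathlib

/-!
Let `L = δ₁ᵀ δ₁` and `λ = λ(𝒯)`. No eigenvalue of `L` lies strictly between `0` and `λ`, so
`L² - λ L` is positive semidefinite. On the diagonal entry of an edge contained in exactly `d`
triangles this gives `λ d ≤ d² + 2 d`, hence `λ ≤ d + 2`. If `λ > n`, every edge therefore lies in
at least `n - 1` triangles, every vertex in at least `n` edges, and there are at least `n + 1`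
vertices; counting incidences back up gives at least `C(n+1,3)` triangles.

Conversely, for all triangles on `n` vertices, `L + δ₀ δ₀ᵀ = n • 1` and `δ₁ δ₀ = 0` give `L² = n L`,
so `n` is the only positive eigenvalue of `L`.
-/

open Finset Matrix

/-- The sign `[T : e]` of an edge `e` in a triangle `T`. -/
noncomputable def triSign (T e : Finset ℕ) : ℝ :=
  if e ⊆ T ∧ e.card = 2 ∧ T.card = 3 then
    if (T \ e).max = T.max ∨ (T \ e).min = T.min then 1 else -1
  else 0

/-- A triangle family: a nonempty finite set of 3-element subsets of ℕ. -/
def IsTriFam (F : Finset (Finset ℕ)) : Prop :=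
  F.Nonempty ∧ ∀ T ∈ F, T.card = 3

/-- The edges of the support graph of a triangle family. -/
def edgesOf (F : Finset (Finset ℕ)) : Finset (Finset ℕ) :=
  F.biUnion fun T => T.powersetCard 2

/-- The vertices of the support graph of a triangle family. -/
def vertsOf (F : Finset (Finset ℕ)) : Finset ℕ :=
  F.biUnion id

/-- The signed edge-triangle incidence matrix of a triangle family. -/
noncomputable def delta1 (F : Finset (Finset ℕ)) :
    Matrix {T // T ∈ F} {e // e ∈ edgesOf F} ℝ :=
  Matrix.of fun T e => triSign T.1 e.1

/-- The smallest positive eigenvalue of a matrix. -/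
noncomputable def lambdaMinPos {m : Type*} [Fintype m] (M : Matrix m m ℝ) : ℝ :=
  sInf {μ : ℝ | 0 < μ ∧ ∃ v : m → ℝ, v ≠ 0 ∧ M.mulVec v = μ • v}

/-- `λ(𝒯)`: the smallest positive eigenvalue of `δ₁(𝒯)ᵀ δ₁(𝒯)`. -/
noncomputable def lam (F : Finset (Finset ℕ)) : ℝ :=
  lambdaMinPos ((delta1 F)ᵀ * delta1 F)

/-- The neighborhood of `x` in the support graph `Γ₀(F)`. -/
def nbrs (F : Finset (Finset ℕ)) (x : ℕ) : Finset ℕ :=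
  (vertsOf F).filter fun y => x ≠ y ∧ ∃ T ∈ F, x ∈ T ∧ y ∈ T

/-- `φ(t)`: the maximum of `λ(𝒯)` over triangle families with `|𝒯| = t`. -/
noncomputable def phi (t : ℕ) : ℝ :=
  sSup {r : ℝ | ∃ F : Finset (Finset ℕ), IsTriFam F ∧ F.card = t ∧ lam F = r}

/-- `Λ(t) = max_{1 ≤ s ≤ t} φ(s)`. -/
noncomputable def Lam (t : ℕ) : ℝ :=
  sSup {r : ℝ | ∃ s : ℕ, 1 ≤ s ∧ s ≤ t ∧ phi s = r}

/-- `H(n) = min{ s ≥ 1 : φ(C(n,3)+s) > n - 1 }`. -/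
noncomputable def Hfun (n : ℕ) : ℕ :=
  sInf {s : ℕ | 1 ≤ s ∧ (n : ℝ) - 1 < phi (n.choose 3 + s)}

/-- The triangle family `𝒯_{c,b}`: all 3-cliques of `K_c ∨ (b isolated vertices)`. -/
def Tcb (c b : ℕ) : Finset (Finset ℕ) :=
  ((Finset.Icc 1 c).powersetCard 3) ∪
    (Finset.Icc (c+1) (c+b)).biUnion
      (fun i => ((Finset.Icc 1 c).powersetCard 2).image (fun p => insert i p))

section LambdaMinPos

variable {m : Type*} [Fintype m] {M : Matrix m m ℝ}

lemma lambdaMinPos_nonneg (M : Matrix m m ℝ) : 0 ≤ lambdaMinPos M :=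
  Real.sInf_nonneg fun _ hμ => hμ.1.le

lemma lambdaMinPos_le {μ : ℝ} (hμ : 0 < μ) {v : m → ℝ} (hv : v ≠ 0) (h : M *ᵥ v = μ • v) :
    lambdaMinPos M ≤ μ :=
  csInf_le ⟨0, fun _ hν => hν.1.le⟩ ⟨hμ, v, hv, h⟩

/-- An eigenvalue `μ` of `M` contributes `μ * (μ - λ)`, which is negative only for `0 < μ < λ`. -/
lemma posSemidef_mul_self_sub_lambdaMinPos_smul (hM : M.IsHermitian) :
    (M * M - lambdaMinPos M • M).PosSemidef := by
  classical
  set U := hM.eigenvectorUnitary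
  set μ := hM.eigenvalues
  have hspec : M = U * diagonal μ * (U : Matrix m m ℝ)ᴴ := hM.spectral_theorem
  have hnonneg : 0 ≤ fun i => μ i * (μ i - lambdaMinPos M) := by
    intro i
    rcases le_or_gt (μ i) 0 with hi | hi
    · exact mul_nonneg_of_nonpos_of_nonpos hi (by linarith [lambdaMinPos_nonneg M])
    · have hv : (hM.eigenvectorBasis i).ofLp ≠ 0 :=
        (WithLp.ofLp_eq_zero 2).ne.2 (hM.eigenvectorBasis.orthonormal.ne_zero i)
      exact mul_nonneg hi.le
        (sub_nonneg.2 (lambdaMinPos_le hi hv (hM.mulVec_eigenvectorBasis i)))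
  have hdiag : M * M - lambdaMinPos M • M =
      U * diagonal (fun i => μ i * (μ i - lambdaMinPos M)) * (U : Matrix m m ℝ)ᴴ := by
    have hU : (U : Matrix m m ℝ)ᴴ * U = 1 := Unitary.coe_star_mul_self U
    have hsplit : diagonal (fun i => μ i * (μ i - lambdaMinPos M)) =
        diagonal μ * diagonal μ - lambdaMinPos M • diagonal μ := by
      rw [diagonal_mul_diagonal, ← diagonal_smul, diagonal_sub]
      congr 1; ext i; simp only [Pi.smul_apply, smul_eq_mul]; ring
    have hsq : M * M = U * (diagonal μ * diagonal μ) * (U : Matrix m m ℝ)ᴴ := by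
      conv_lhs => rw [hspec]
      simp only [Matrix.mul_assoc]
      rw [← Matrix.mul_assoc _ (U : Matrix m m ℝ), hU, Matrix.one_mul]
    rw [hsplit, mul_sub, sub_mul, ← hsq, mul_smul_comm, smul_mul_assoc, ← hspec]
  rw [hdiag]
  exact (PosSemidef.diagonal hnonneg).mul_mul_conjTranspose_same _

lemma lambdaMinPos_eq_of_mul_self_eq_smul {c : ℝ} (hc : 0 < c) (hM : M ≠ 0)
    (h : M * M = c • M) : lambdaMinPos M = c := by
  classical
  have hspec : {μ : ℝ | 0 < μ ∧ ∃ v : m → ℝ, v ≠ 0 ∧ M *ᵥ v = μ • v} = {c} := by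
    ext μ
    constructor
    · rintro ⟨hμ, v, hv, hMv⟩
      have hμv : μ • μ • v = c • μ • v := by
        rw [← hMv, ← mulVec_smul, ← hMv, mulVec_mulVec, h, smul_mulVec]
      exact smul_left_injective ℝ (smul_ne_zero hμ.ne' hv) hμv
    · rintro rfl
      obtain ⟨j, hj⟩ : ∃ j, M.col j ≠ 0 := by
        by_contra! hcol
        exact hM (ext_col hcol)
      exact ⟨hc, M.col j, hj, by rw [← mulVec_single_one, mulVec_mulVec, h, smul_mulVec]⟩
  rw [lambdaMinPos, hspec, csInf_singleton]

end LambdaMinPos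

section Codegree

open scoped FinsetFamily

variable {α : Type*} [DecidableEq α] {𝒜 : Finset (Finset α)} {k r : ℕ}

/-- The codegree of `e` in the set family `𝒜`: the number of members of `𝒜` containing `e`. For a
triangle family and an edge `e`, it counts the triangles on `e`. -/
def codegree (𝒜 : Finset (Finset α)) (e : Finset α) : ℕ := #{T ∈ 𝒜 | e ⊆ T}

lemma card_shadow_mul_le_of_le_codegree (h𝒜 : (𝒜 : Set (Finset α)).Sized (r + 1))
    (hk : ∀ e ∈ ∂ 𝒜, k ≤ codegree 𝒜 e) : #(∂ 𝒜) * k ≤ #𝒜 * (r + 1) := by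
  refine card_mul_le_card_mul (fun e T : Finset α => e ⊆ T) hk fun T hT => ?_
  have hfaces : (∂ 𝒜).bipartiteBelow (fun e T => e ⊆ T) T ⊆ T.powersetCard r := fun e he =>
    mem_powersetCard.2 ⟨(mem_filter.1 he).2, h𝒜.shadow (mem_filter.1 he).1⟩
  calc #((∂ 𝒜).bipartiteBelow (fun e T => e ⊆ T) T) ≤ #(T.powersetCard r) := card_le_card hfaces
    _ = r + 1 := by rw [card_powersetCard, h𝒜 hT, Nat.choose_succ_self_right]

/-- If `g ∪ {y}` lies in the shadow, then removing `y` from the `k` members of `𝒜` containing it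
gives `k` members of the shadow that contain `g` and differ from `g ∪ {y}`. -/
lemma succ_le_codegree_shadow (hk : ∀ e ∈ ∂ 𝒜, k ≤ codegree 𝒜 e) {g : Finset α}
    (hg : g ∈ ∂ (∂ 𝒜)) : k + 1 ≤ codegree (∂ 𝒜) g := by
  obtain ⟨y, hy, he⟩ := mem_shadow_iff_insert_mem.1 hg
  set e := insert y g
  have hmem : e ∈ {f ∈ ∂ 𝒜 | g ⊆ f} := mem_filter.2 ⟨he, subset_insert y g⟩
  have hmaps : ∀ T ∈ ({T ∈ 𝒜 | e ⊆ T} : Finset _), T.erase y ∈ {f ∈ ∂ 𝒜 | g ⊆ f}.erase e := by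
    intro T hT
    obtain ⟨hT, heT⟩ := mem_filter.1 hT
    have hyT : y ∈ T := heT (mem_insert_self y g)
    refine mem_erase.2 ⟨fun h => notMem_erase y T (h ▸ mem_insert_self y g), mem_filter.2 ⟨?_, ?_⟩⟩
    · exact erase_mem_shadow hT hyT
    · exact subset_erase.2 ⟨(subset_insert y g).trans heT, hy⟩
  have hinj : Set.InjOn (fun T : Finset α => T.erase y) ({T ∈ 𝒜 | e ⊆ T} : Finset _) :=
    (erase_injOn' y).mono fun T hT => (mem_filter.1 hT).2 (mem_insert_self y g)
  calc k + 1 ≤ #({f ∈ ∂ 𝒜 | g ⊆ f}.erase e) + 1 := by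
        gcongr; exact (hk e he).trans (card_le_card_of_injOn _ hmaps hinj)
    _ = codegree (∂ 𝒜) g := card_erase_add_one hmem

theorem choose_le_card_of_le_codegree (h𝒜 : (𝒜 : Set (Finset α)).Sized r) (hne : 𝒜.Nonempty)
    (hk : ∀ e ∈ ∂ 𝒜, k ≤ codegree 𝒜 e) : (k + r - 1).choose r ≤ #𝒜 := by
  induction r generalizing k 𝒜 with
  | zero => exact (Nat.choose_zero_right _).trans_le hne.card_pos
  | succ r ih =>
    have hne' : (∂ 𝒜).Nonempty := by
      obtain ⟨T, hT⟩ := hne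
      obtain ⟨x, hx⟩ := card_pos.1 (r.succ_pos.trans_eq (h𝒜 hT).symm)
      exact ⟨_, erase_mem_shadow hT hx⟩
    have hshadow : (k + r).choose r ≤ #(∂ 𝒜) := by
      have h := ih h𝒜.shadow hne' fun g hg => succ_le_codegree_shadow hk hg
      rwa [Nat.add_right_comm, Nat.add_sub_cancel] at h
    refine Nat.le_of_mul_le_mul_right ?_ r.succ_pos
    calc (k + r).choose (r + 1) * (r + 1) = (k + r).choose r * k := by
          rw [Nat.choose_succ_right_eq, Nat.add_sub_cancel]
      _ ≤ #(∂ 𝒜) * k := Nat.mul_le_mul_right k hshadow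
      _ ≤ #𝒜 * (r + 1) := card_shadow_mul_le_of_le_codegree h𝒜 hk

end Codegree

section Signs

variable {e f : Finset ℕ} {x y z : ℕ}

/-- The sign `[e : x]` of an endpoint `x` of an edge `e`: `+1` at the larger endpoint, `-1` at the
smaller one. It is the entry of the signed vertex-edge incidence matrix `δ₀`. -/
noncomputable def edgeSign (e : Finset ℕ) (x : ℕ) : ℝ :=
  if x ∈ e then if ∀ y ∈ e, y ≤ x then 1 else -1 else 0

lemma edgeSign_eq_zero (hx : x ∉ e) : edgeSign e x = 0 := if_neg hx

lemma edgeSign_sq (hx : x ∈ e) : edgeSign e x ^ 2 = 1 := by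
  unfold edgeSign; split_ifs <;> norm_num

lemma edgeSign_pair_right (x y : ℕ) : edgeSign {x, y} y = if x ≤ y then 1 else -1 := by
  have hmax : (∀ w ∈ ({x, y} : Finset ℕ), w ≤ y) ↔ x ≤ y := by simp
  rw [edgeSign, if_pos (by simp)]
  simp only [hmax]

lemma edgeSign_pair_left (h : x ≠ y) : edgeSign {x, y} x = -edgeSign {x, y} y := by
  rw [edgeSign_pair_right, pair_comm, edgeSign_pair_right]
  split_ifs <;> first | omega | norm_num

lemma triSign_eq_zero_of_not_subset {T : Finset ℕ} (h : ¬e ⊆ T) : triSign T e = 0 :=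
  if_neg fun h' => h h'.1

lemma triSign_eq_zero_of_card_ne {T : Finset ℕ} (h : #T ≠ 3) : triSign T e = 0 :=
  if_neg fun h' => h h'.2.2

lemma triSign_sq {T : Finset ℕ} (he : #e = 2) (hT : #T = 3) :
    triSign T e ^ 2 = if e ⊆ T then 1 else 0 := by
  unfold triSign; split_ifs <;> simp_all

lemma triSign_mul_triSign_eq_zero {T : Finset ℕ} (he : #e = 2) (hf : #f = 2) (hef : e ≠ f)
    (hT : T ≠ e ∪ f) : triSign T e * triSign T f = 0 := by
  by_contra h
  obtain ⟨hTe, hTf⟩ := mul_ne_zero_iff.1 h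
  have heT : e ⊆ T := of_not_not fun h => hTe (triSign_eq_zero_of_not_subset h)
  have hfT : f ⊆ T := of_not_not fun h => hTf (triSign_eq_zero_of_not_subset h)
  have hT3 : #T = 3 := of_not_not fun h => hTe (triSign_eq_zero_of_card_ne h)
  have hunion : 2 < #(e ∪ f) := by
    refine lt_of_not_ge fun hle => hef ?_
    rw [eq_of_subset_of_card_le subset_union_left (hle.trans_eq he.symm)]
    exact (eq_of_subset_of_card_le subset_union_right (hle.trans_eq hf.symm)).symm
  exact hT (eq_of_subset_of_card_le (union_subset heT hfT) (by omega)).symm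

lemma triSign_insert_pair (hxy : x ≠ y) (hxz : x ≠ z) (hyz : y ≠ z) :
    triSign {x, y, z} {x, y} = edgeSign {x, z} z * edgeSign {y, z} z := by
  have hsub : ({x, y} : Finset ℕ) ⊆ {x, y, z} := by grind
  have hdiff : ({x, y, z} : Finset ℕ) \ {x, y} = {z} := by grind
  have hmax : ({z} : Finset ℕ).max = ({x, y, z} : Finset ℕ).max ↔ x ≤ z ∧ y ≤ z := by
    simp only [max_insert, max_singleton, ← WithBot.coe_max, WithBot.coe_inj]
    omega
  have hmin : ({z} : Finset ℕ).min = ({x, y, z} : Finset ℕ).min ↔ z ≤ x ∧ z ≤ y := by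
    simp only [min_insert, min_singleton, ← WithTop.coe_min, WithTop.coe_inj]
    omega
  rw [triSign, if_pos ⟨hsub, card_pair hxy, card_eq_three.2 ⟨x, y, z, hxy, hxz, hyz, rfl⟩⟩, hdiff,
    edgeSign_pair_right, edgeSign_pair_right]
  simp only [hmax, hmin]
  split_ifs <;> first | omega | norm_num

lemma exists_eq_pair_of_mem (he : #e = 2) (hx : x ∈ e) : ∃ y, x ≠ y ∧ e = {x, y} := by
  obtain ⟨y, hy⟩ := card_eq_one.1 ((card_erase_of_mem hx).trans (by rw [he]))
  exact ⟨y, fun h => notMem_erase x e (by rw [hy, mem_singleton, h]), by rw [← hy, insert_erase hx]⟩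

lemma sum_triSign_mul_edgeSign {T : Finset ℕ} {E : Finset (Finset ℕ)} (hE : T.powersetCard 2 ⊆ E)
    (v : ℕ) : ∑ e ∈ E, triSign T e * edgeSign e v = 0 := by
  rw [← sum_subset hE]
  swap
  · intro e _ he
    rw [triSign, if_neg fun h => he (mem_powersetCard.2 ⟨h.1, h.2.1⟩), zero_mul]
  by_cases hT : #T = 3
  swap
  · exact sum_eq_zero fun e _ => by rw [triSign_eq_zero_of_card_ne hT, zero_mul]
  by_cases hv : v ∈ T
  swap
  · exact sum_eq_zero fun e he => by
      rw [edgeSign_eq_zero fun h => hv ((mem_powersetCard.1 he).1 h), mul_zero]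
  obtain ⟨y, z, hyz, hyzT⟩ := card_eq_two.1 ((card_erase_of_mem hv).trans (by rw [hT]))
  obtain rfl : T = {v, y, z} := by rw [← hyzT, insert_erase hv]
  have hvy : v ≠ y := by grind
  have hvz : v ≠ z := by grind
  have hne : ({v, y} : Finset ℕ) ≠ {v, z} := fun h => by
    have hy : y ∈ ({v, z} : Finset ℕ) := h ▸ mem_insert_of_mem (mem_singleton_self y)
    grind
  rw [sum_eq_add {v, y} {v, z} hne _ (by grind) (by grind)]
  · have h₁ := triSign_insert_pair hvy hvz hyz
    have h₂ := triSign_insert_pair hvz hvy hyz.symm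
    rw [pair_comm z y] at h₂
    rw [h₁, h₂, edgeSign_pair_left hvy, edgeSign_pair_left hvz, edgeSign_pair_left hyz]
    ring
  · rintro e he ⟨hne₁, hne₂⟩
    obtain ⟨he, he2⟩ := mem_powersetCard.1 he
    rw [edgeSign_eq_zero, mul_zero]
    intro hve
    obtain ⟨w, hvw, rfl⟩ := exists_eq_pair_of_mem he2 hve
    have hw : w ∈ ({v, y, z} : Finset ℕ) := he (mem_insert_of_mem (mem_singleton_self w))
    obtain rfl | rfl : w = y ∨ w = z := by grind
    · exact hne₁ rfl
    · exact hne₂ rfl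

lemma sum_edgeSign_mul_edgeSign (he : #e = 2) (hf : #f = 2) (hef : e ≠ f) {V : Finset ℕ}
    (heV : e ⊆ V) :
    ∑ x ∈ V, edgeSign e x * edgeSign f x = -(triSign (e ∪ f) e * triSign (e ∪ f) f) := by
  by_cases hdisj : Disjoint e f
  · have hcard : #(e ∪ f) ≠ 3 := by rw [card_union_of_disjoint hdisj, he, hf]; norm_num
    rw [triSign_eq_zero_of_card_ne hcard, zero_mul, neg_zero]
    refine sum_eq_zero fun x _ => ?_
    by_cases hx : x ∈ e
    · rw [edgeSign_eq_zero (disjoint_left.1 hdisj hx), mul_zero]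
    · rw [edgeSign_eq_zero hx, zero_mul]
  · obtain ⟨x, hxe, hxf⟩ := not_disjoint_iff.1 hdisj
    obtain ⟨y, hxy, rfl⟩ := exists_eq_pair_of_mem he hxe
    obtain ⟨z, hxz, rfl⟩ := exists_eq_pair_of_mem hf hxf
    have hyz : y ≠ z := fun h => hef (by rw [h])
    have hunion : ({x, y} ∪ {x, z} : Finset ℕ) = {x, y, z} := by grind
    have h₁ := triSign_insert_pair hxy hxz hyz
    have h₂ := triSign_insert_pair hxz hxy hyz.symm
    rw [pair_comm z y] at h₂
    have hsq : edgeSign {y, z} z ^ 2 = 1 := edgeSign_sq (by simp)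
    rw [sum_eq_single_of_mem x (heV hxe), hunion, h₁, h₂, edgeSign_pair_left hxy,
      edgeSign_pair_left hxz, edgeSign_pair_left hyz]
    · linear_combination -edgeSign {x, y} y * edgeSign {x, z} z * hsq
    · intro w _ hw
      by_cases hwy : w = y
      · rw [edgeSign_eq_zero (e := {x, z}) (by grind), mul_zero]
      · rw [edgeSign_eq_zero (e := {x, y}) (by grind), zero_mul]

end Signs

section EdgesOf

open scoped FinsetFamily

variable {F : Finset (Finset ℕ)} {e : Finset ℕ}

lemma mem_edgesOf : e ∈ edgesOf F ↔ ∃ T ∈ F, e ⊆ T ∧ #e = 2 := by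
  simp only [edgesOf, mem_biUnion, mem_powersetCard]

lemma card_of_mem_edgesOf (he : e ∈ edgesOf F) : #e = 2 := by
  obtain ⟨_, _, _, he⟩ := mem_edgesOf.1 he
  exact he

lemma codegree_pos (he : e ∈ edgesOf F) : 0 < codegree F e := by
  obtain ⟨T, hT, heT, _⟩ := mem_edgesOf.1 he
  exact card_pos.2 ⟨T, mem_filter.2 ⟨hT, heT⟩⟩

lemma edgesOf_nonempty (hF : IsTriFam F) : (edgesOf F).Nonempty := by
  obtain ⟨T, hT⟩ := hF.1
  obtain ⟨e, heT, he⟩ := exists_subset_card_eq (s := T) (n := 2) (by rw [hF.2 T hT]; norm_num)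
  exact ⟨e, mem_edgesOf.2 ⟨T, hT, heT, he⟩⟩

lemma shadow_subset_edgesOf (hF : ∀ T ∈ F, #T = 3) : ∂ F ⊆ edgesOf F := by
  intro e he
  obtain ⟨T, hT, heT, hcard⟩ := mem_shadow_iff_exists_mem_card_add_one.1 he
  exact mem_edgesOf.2 ⟨T, hT, heT, by have := hF T hT; omega⟩

lemma subset_vertsOf (he : e ∈ edgesOf F) : e ⊆ vertsOf F := by
  obtain ⟨T, hT, heT, _⟩ := mem_edgesOf.1 he
  exact heT.trans (subset_biUnion_of_mem id hT)

lemma isTriFam_powersetCard {V : Finset ℕ} (hV : 3 ≤ #V) : IsTriFam (V.powersetCard 3) :=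
  ⟨powersetCard_nonempty.2 hV, fun _ hT => (mem_powersetCard.1 hT).2⟩

lemma subset_of_mem_edgesOf_powersetCard {V : Finset ℕ} {r : ℕ}
    (he : e ∈ edgesOf (V.powersetCard r)) : e ⊆ V := by
  obtain ⟨T, hT, heT, _⟩ := mem_edgesOf.1 he
  exact heT.trans (mem_powersetCard.1 hT).1

/-- Each counted `f` is one of the two further edges of some triangle on `e`, namely `e ∪ f`. -/
lemma card_filter_union_mem_le (hF : ∀ T ∈ F, #T = 3) (he : e ∈ edgesOf F) :
    #{f ∈ (edgesOf F).erase e | e ∪ f ∈ F} ≤ codegree F e * 2 := by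
  have hsub : {f ∈ (edgesOf F).erase e | e ∪ f ∈ F} ⊆
      {T ∈ F | e ⊆ T}.biUnion fun T => (T.powersetCard 2).erase e := by
    intro f hf
    obtain ⟨hf, hunion⟩ := mem_filter.1 hf
    obtain ⟨hfe, hf⟩ := mem_erase.1 hf
    exact mem_biUnion.2 ⟨e ∪ f, mem_filter.2 ⟨hunion, subset_union_left⟩,
      mem_erase.2 ⟨hfe, mem_powersetCard.2 ⟨subset_union_right, card_of_mem_edgesOf hf⟩⟩⟩
  refine (card_le_card hsub).trans (card_biUnion_le_card_mul _ _ _ fun T hT => ?_)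
  obtain ⟨hT, heT⟩ := mem_filter.1 hT
  rw [card_erase_of_mem (mem_powersetCard.2 ⟨heT, card_of_mem_edgesOf he⟩), card_powersetCard,
    hF T hT]
  decide

end EdgesOf

section Laplacian

variable {F : Finset (Finset ℕ)}

/-- The signed vertex-edge incidence matrix `δ₀` of a triangle family, with rows indexed by the
edges of the support graph, so that `δ₁ δ₀ = 0`. -/
noncomputable def delta0 (F : Finset (Finset ℕ)) :
    Matrix {e // e ∈ edgesOf F} {x // x ∈ vertsOf F} ℝ :=
  Matrix.of fun e x => edgeSign e.1 x.1

/-- The up-Laplacian `δ₁ᵀ δ₁` on the edges of a triangle family, whose smallest positive eigenvalue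
is `λ(𝒯)`. -/
noncomputable def upLaplacian (F : Finset (Finset ℕ)) :
    Matrix {e // e ∈ edgesOf F} {e // e ∈ edgesOf F} ℝ :=
  (delta1 F)ᵀ * delta1 F

/-- The down-Laplacian `δ₀ δ₀ᵀ` on the edges of a triangle family. -/
noncomputable def downLaplacian (F : Finset (Finset ℕ)) :
    Matrix {e // e ∈ edgesOf F} {e // e ∈ edgesOf F} ℝ :=
  delta0 F * (delta0 F)ᵀ

lemma isHermitian_upLaplacian (F : Finset (Finset ℕ)) : (upLaplacian F).IsHermitian :=
  isHermitian_conjTranspose_mul_self (delta1 F)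

lemma delta1_mul_delta0 (F : Finset (Finset ℕ)) : delta1 F * delta0 F = 0 := by
  ext T x
  rw [mul_apply]
  exact (sum_coe_sort (edgesOf F) fun e => triSign T.1 e * edgeSign e x.1).trans
    (sum_triSign_mul_edgeSign (subset_biUnion_of_mem (powersetCard 2) T.2) x.1)

lemma upLaplacian_mul_downLaplacian (F : Finset (Finset ℕ)) :
    upLaplacian F * downLaplacian F = 0 := by
  rw [upLaplacian, downLaplacian, Matrix.mul_assoc, ← Matrix.mul_assoc (delta1 F),
    delta1_mul_delta0, Matrix.zero_mul, Matrix.mul_zero]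

lemma upLaplacian_apply (e f : {e // e ∈ edgesOf F}) :
    upLaplacian F e f = ∑ T ∈ F, triSign T e * triSign T f := by
  rw [upLaplacian, mul_apply]
  exact sum_coe_sort F fun T => triSign T e * triSign T f

lemma upLaplacian_apply_self (hF : ∀ T ∈ F, #T = 3) (e : {e // e ∈ edgesOf F}) :
    upLaplacian F e e = codegree F e := by
  have hsq : ∀ T ∈ F, triSign T e * triSign T e = if e.1 ⊆ T then 1 else 0 := fun T hT => by
    rw [← sq, triSign_sq (card_of_mem_edgesOf e.2) (hF T hT)]
  rw [upLaplacian_apply, sum_congr rfl hsq, sum_boole, codegree]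

lemma upLaplacian_apply_of_ne {e f : {e // e ∈ edgesOf F}} (hef : e ≠ f) :
    upLaplacian F e f =
      if e.1 ∪ f.1 ∈ F then triSign (e ∪ f) e * triSign (e ∪ f) f else 0 := by
  have hzero : ∀ T ∈ F, T ≠ e.1 ∪ f.1 → triSign T e * triSign T f = 0 := fun T _ =>
    triSign_mul_triSign_eq_zero (card_of_mem_edgesOf e.2) (card_of_mem_edgesOf f.2)
      (Subtype.coe_ne_coe.2 hef)
  rw [upLaplacian_apply]
  split_ifs with h
  · exact sum_eq_single_of_mem _ h hzero
  · exact sum_eq_zero fun T hT => hzero T hT fun hTef => h (hTef ▸ hT)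

lemma upLaplacian_apply_sq_le_of_ne (hF : ∀ T ∈ F, #T = 3) {e f : {e // e ∈ edgesOf F}}
    (hef : e ≠ f) : upLaplacian F e f ^ 2 ≤ if e.1 ∪ f.1 ∈ F then 1 else 0 := by
  rw [upLaplacian_apply_of_ne hef]
  split_ifs with h
  · rw [mul_pow, triSign_sq (card_of_mem_edgesOf e.2) (hF _ h), if_pos subset_union_left,
      triSign_sq (card_of_mem_edgesOf f.2) (hF _ h), if_pos subset_union_right, mul_one]
  · norm_num

lemma upLaplacian_mul_self_apply_self_le (hF : ∀ T ∈ F, #T = 3) (e : {e // e ∈ edgesOf F}) :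
    (upLaplacian F * upLaplacian F) e e ≤ (codegree F e : ℝ) ^ 2 + 2 * codegree F e := by
  have hoff : ∑ f ∈ univ.erase e, upLaplacian F e f ^ 2 ≤ 2 * codegree F e := by
    calc ∑ f ∈ univ.erase e, upLaplacian F e f ^ 2
        ≤ ∑ f ∈ univ.erase e, if e.1 ∪ f.1 ∈ F then (1 : ℝ) else 0 :=
          sum_le_sum fun f hf => upLaplacian_apply_sq_le_of_ne hF (ne_of_mem_erase hf).symm
      _ = #{f ∈ (univ.erase e) | e.1 ∪ f.1 ∈ F} := sum_boole _ _
      _ ≤ #{f ∈ (edgesOf F).erase e | e.1 ∪ f ∈ F} := by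
          refine mod_cast card_le_card_of_injOn Subtype.val (fun f hf => ?_)
            Subtype.val_injective.injOn
          obtain ⟨hfe, hunion⟩ := mem_filter.1 hf
          exact mem_filter.2
            ⟨mem_erase.2 ⟨Subtype.coe_ne_coe.2 (ne_of_mem_erase hfe), f.2⟩, hunion⟩
      _ ≤ 2 * codegree F e := by
          exact_mod_cast (card_filter_union_mem_le hF e.2).trans_eq (mul_comm _ _)
  have hsymm : ∀ f, upLaplacian F f e = upLaplacian F e f := fun f =>
    (isHermitian_upLaplacian F).apply e f
  simp only [mul_apply, hsymm, ← sq]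
  rw [← add_sum_erase _ _ (mem_univ e), upLaplacian_apply_self hF]
  exact add_le_add_right hoff _

lemma lam_le_codegree_add_two (hF : ∀ T ∈ F, #T = 3) {e : Finset ℕ} (he : e ∈ edgesOf F) :
    lam F ≤ codegree F e + 2 := by
  have hpsd : (upLaplacian F * upLaplacian F - lam F • upLaplacian F).PosSemidef :=
    posSemidef_mul_self_sub_lambdaMinPos_smul (isHermitian_upLaplacian F)
  have hdiag : lam F * upLaplacian F ⟨e, he⟩ ⟨e, he⟩ ≤
      (upLaplacian F * upLaplacian F) ⟨e, he⟩ ⟨e, he⟩ := sub_nonneg.1 hpsd.diag_nonneg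
  have hpos : (0 : ℝ) < codegree F e := mod_cast codegree_pos he
  refine le_of_mul_le_mul_right ?_ hpos
  calc lam F * codegree F e ≤ (upLaplacian F * upLaplacian F) ⟨e, he⟩ ⟨e, he⟩ := by
        rwa [← upLaplacian_apply_self hF ⟨e, he⟩]
    _ ≤ (codegree F e : ℝ) ^ 2 + 2 * codegree F e := upLaplacian_mul_self_apply_self_le hF ⟨e, he⟩
    _ = (codegree F e + 2) * codegree F e := by ring

theorem lam_le_of_card_lt_choose (hF : IsTriFam F) {n : ℕ} (hn : #F < (n + 1).choose 3) :
    lam F ≤ n := by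
  by_contra! hlam
  refine hn.not_ge ?_
  have hcodegree : ∀ e ∈ edgesOf F, n - 1 ≤ codegree F e := fun e he => by
    have h : (n : ℝ) < (codegree F e + 2 : ℕ) :=
      mod_cast hlam.trans_le (lam_le_codegree_add_two hF.2 he)
    have := Nat.cast_lt.1 h
    omega
  have hn0 : n ≠ 0 := by rintro rfl; exact Nat.not_lt_zero _ hn
  have hchoose := choose_le_card_of_le_codegree (r := 3) (fun T hT => hF.2 T hT) hF.1
    fun e he => hcodegree e (shadow_subset_edgesOf hF.2 he)
  rwa [show n - 1 + 3 - 1 = n + 1 by omega] at hchoose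

lemma downLaplacian_apply (e f : {e // e ∈ edgesOf F}) :
    downLaplacian F e f = ∑ x ∈ vertsOf F, edgeSign e x * edgeSign f x := by
  rw [downLaplacian, mul_apply]
  exact sum_coe_sort (vertsOf F) fun x => edgeSign e x * edgeSign f x

lemma downLaplacian_apply_self (e : {e // e ∈ edgesOf F}) : downLaplacian F e e = 2 := by
  rw [downLaplacian_apply, ← sum_subset (subset_vertsOf e.2) fun x _ hx => by
    rw [edgeSign_eq_zero hx, zero_mul]]
  calc ∑ x ∈ e.1, edgeSign e x * edgeSign e x = ∑ x ∈ e.1, 1 :=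
        sum_congr rfl fun x hx => by rw [← sq, edgeSign_sq hx]
    _ = 2 := by rw [sum_const, card_of_mem_edgesOf e.2]; norm_num

lemma downLaplacian_apply_of_ne {e f : {e // e ∈ edgesOf F}} (hef : e ≠ f) :
    downLaplacian F e f = -(triSign (e ∪ f) e * triSign (e ∪ f) f) := by
  rw [downLaplacian_apply]
  exact sum_edgeSign_mul_edgeSign (card_of_mem_edgesOf e.2) (card_of_mem_edgesOf f.2)
    (Subtype.coe_ne_coe.2 hef) (subset_vertsOf e.2)

theorem upLaplacian_add_downLaplacian_powersetCard (V : Finset ℕ) :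
    upLaplacian (V.powersetCard 3) + downLaplacian (V.powersetCard 3) = (#V : ℝ) • 1 := by
  ext e f
  have heV := subset_of_mem_edgesOf_powersetCard e.2
  rw [Matrix.add_apply, Matrix.smul_apply]
  obtain rfl | hef := eq_or_ne e f
  · have hcodegree : codegree (V.powersetCard 3) e.1 + 2 = #V := by
      have he := card_of_mem_edgesOf e.2
      have hle := card_le_card heV
      rw [codegree, card_filter_powersetCard_subset _ _ _ heV (by omega), he,
        Nat.choose_one_right]
      omega
    rw [upLaplacian_apply_self fun T hT => (mem_powersetCard.1 hT).2, downLaplacian_apply_self,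
      one_apply_eq, smul_eq_mul, mul_one]
    exact_mod_cast hcodegree
  · rw [downLaplacian_apply_of_ne hef, upLaplacian_apply_of_ne hef, one_apply_ne hef, smul_zero]
    split_ifs with h
    · exact add_neg_cancel _
    · have hfV := subset_of_mem_edgesOf_powersetCard f.2
      rw [triSign_eq_zero_of_card_ne fun h3 => h (mem_powersetCard.2 ⟨union_subset heV hfV, h3⟩),
        zero_mul, neg_zero, add_zero]

theorem lam_powersetCard {V : Finset ℕ} (hV : 3 ≤ #V) : lam (V.powersetCard 3) = #V := by
  set L := upLaplacian (V.powersetCard 3)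
  have hF := isTriFam_powersetCard hV
  have hpos : (0 : ℝ) < #V := by exact_mod_cast (by omega : 0 < #V)
  have hL : L ≠ 0 := by
    obtain ⟨e, he⟩ := edgesOf_nonempty hF
    intro h
    have hdiag := upLaplacian_apply_self hF.2 ⟨e, he⟩
    rw [show upLaplacian _ = 0 from h] at hdiag
    exact (codegree_pos he).ne (Nat.cast_injective (R := ℝ) (by rwa [Nat.cast_zero]))
  refine lambdaMinPos_eq_of_mul_self_eq_smul hpos hL ?_
  calc L * L = L * ((#V : ℝ) • 1 - downLaplacian (V.powersetCard 3)) := by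
        rw [← upLaplacian_add_downLaplacian_powersetCard, add_sub_cancel_right]
    _ = (#V : ℝ) • L := by
        rw [mul_sub, upLaplacian_mul_downLaplacian, sub_zero, mul_smul_comm, mul_one]

end Laplacian

section Staircase

variable {n t : ℕ}

lemma phi_le_of_lt_choose {s : ℕ} (hs : s < (n + 1).choose 3) : phi s ≤ n := by
  refine Real.sSup_le ?_ n.cast_nonneg
  rintro _ ⟨F, hF, rfl, rfl⟩
  exact lam_le_of_card_lt_choose hF hs

lemma le_phi_choose (hn : 3 ≤ n) : (n : ℝ) ≤ phi (n.choose 3) := by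
  have hlt : n.choose 3 < (n + 1).choose 3 := by
    rw [Nat.choose_succ_succ' n 2]
    exact Nat.lt_add_of_pos_left (Nat.choose_pos (by omega))
  refine le_csSup ⟨n, ?_⟩ ⟨(range n).powersetCard 3, isTriFam_powersetCard ?_, ?_, ?_⟩
  · rintro _ ⟨F, hF, hcard, rfl⟩
    exact lam_le_of_card_lt_choose hF (hcard.trans_lt hlt)
  · rwa [card_range]
  · rw [card_powersetCard, card_range]
  · rw [lam_powersetCard (by rwa [card_range]), card_range]

theorem Lam_eq_of_choose_le_of_lt_choose (hn : 3 ≤ n) (h₁ : n.choose 3 ≤ t)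
    (h₂ : t < (n + 1).choose 3) : Lam t = n := by
  have hle : ∀ r ∈ {r : ℝ | ∃ s : ℕ, 1 ≤ s ∧ s ≤ t ∧ phi s = r}, r ≤ n := by
    rintro _ ⟨s, _, hs, rfl⟩
    exact phi_le_of_lt_choose (hs.trans_lt h₂)
  refine le_antisymm (Real.sSup_le hle n.cast_nonneg) ?_
  exact (le_phi_choose hn).trans (le_csSup ⟨n, hle⟩ ⟨n.choose 3, Nat.choose_pos hn, h₁, rfl⟩)

lemma le_choose_three_add_two (n : ℕ) : n ≤ n.choose 3 + 2 := by
  induction n with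
  | zero => exact Nat.zero_le _
  | succ n ih =>
    obtain hn | hn := Nat.lt_or_ge n 2
    · omega
    · have hpos : 0 < n.choose 2 := Nat.choose_pos hn
      have hpascal : (n + 1).choose 3 = n.choose 2 + n.choose 3 := Nat.choose_succ_succ' n 2
      omega

lemma bddAbove_setOf_choose_three_le (t : ℕ) : BddAbove {n : ℕ | n.choose 3 ≤ t} :=
  ⟨t + 2, fun n hn => (le_choose_three_add_two n).trans (Nat.add_le_add_right hn 2)⟩

lemma lt_choose_sSup_succ (t : ℕ) : t < (sSup {n : ℕ | n.choose 3 ≤ t} + 1).choose 3 := by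
  by_contra! h
  exact (Nat.lt_succ_self _).not_ge (le_csSup (bddAbove_setOf_choose_three_le t) h)

theorem Lam_eq_sSup (ht : 1 ≤ t) : Lam t = (sSup {n : ℕ | n.choose 3 ≤ t} : ℕ) := by
  have hbdd := bddAbove_setOf_choose_three_le t
  have hmem : (sSup {n : ℕ | n.choose 3 ≤ t}).choose 3 ≤ t :=
    Nat.sSup_mem ⟨0, Nat.zero_le t⟩ hbdd
  exact Lam_eq_of_choose_le_of_lt_choose (le_csSup hbdd ht) hmem (lt_choose_sSup_succ t)

end Staircase

/-- Exact staircase formula: for `t ≥ 3`, `Λ(t) = max{ n ∈ ℕ : C(n,3) ≤ t }`;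
equivalently, if `C(n,3) ≤ t < C(n+1,3)` with `n ≥ 3`, then `Λ(t) = n`. -/
theorem stmt8 (t : ℕ) (ht : 3 ≤ t) :
    Lam t = ((sSup {n : ℕ | n.choose 3 ≤ t} : ℕ) : ℝ) ∧
    (∀ n : ℕ, 3 ≤ n → n.choose 3 ≤ t → t < (n + 1).choose 3 → Lam t = (n : ℝ)) := by
  exact ⟨Lam_eq_sSup (by omega), fun _ => Lam_eq_of_choose_le_of_lt_choose⟩
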